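/- arXiv:1411.7996 — 2 statements merged into one kernel-verified Lean document; each statement's English description precedes it below -/
import Mathlib

section
/- Let n ≥ 3 be an integer and let B(x,R) ⊂ ℝⁿ be an open ball. Let c ≥ 0, let f be a smooth nonnegative function on an open set containing the closed ball B̄(x,R) satisfying −Δf ≤ c·f pointwise on B(x,R), and let φ be a smooth function with compact support contained in B(x,R). Then ∫_{B(x,R)} ‖∇(φf)‖² dx ≤ ∫_{B(x,R)} (‖∇φ‖² + c·φ²) f² dx. -/
/-!
For `Vᵢ = φ² f ∂ᵢf`, expanding the square gives, on the ball,
`‖∇(φf)‖² = ‖∇φ‖² f² - φ² f Δf + ∑ᵢ ∂ᵢVᵢ`,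
and `-Δf ≤ c f`, multiplied by `φ² f ≥ 0`, bounds the right-hand side by
`(‖∇φ‖² + c φ²) f² + ∑ᵢ ∂ᵢVᵢ` (`norm_gradient_mul_sq_le`). Each `Vᵢ` extends by zero to a smooth
function compactly supported in the ball, so the integral of `∑ᵢ ∂ᵢVᵢ` vanishes
(`integral_fderiv_apply_eq_zero`), and integrating the pointwise bound gives the estimate.
-/

open MeasureTheory Metric

/-- The Euclidean (analyst's) Laplacian `Δf = ∑ i ∂²f/∂xᵢ²`. -/
noncomputable def lap {n : ℕ} (f : EuclideanSpace ℝ (Fin n) → ℝ)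
    (x : EuclideanSpace ℝ (Fin n)) : ℝ :=
  ∑ i : Fin n,
    fderiv ℝ (fun y => fderiv ℝ f y (EuclideanSpace.single i 1)) x (EuclideanSpace.single i 1)

lemma norm_gradient_sq {n : ℕ} (h : EuclideanSpace ℝ (Fin n) → ℝ)
    (y : EuclideanSpace ℝ (Fin n)) :
    ‖gradient h y‖ ^ 2 = ∑ i : Fin n, (fderiv ℝ h y (EuclideanSpace.single i 1)) ^ 2 := by
  rw [EuclideanSpace.real_norm_sq_eq]
  refine Finset.sum_congr rfl fun i _ => ?_
  have h1 : inner ℝ (gradient h y) (EuclideanSpace.single i (1 : ℝ))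
      = fderiv ℝ h y (EuclideanSpace.single i 1) := by
    rw [gradient, InnerProductSpace.toDual_symm_apply]
  rw [← h1, EuclideanSpace.inner_single_right]
  simp

lemma continuous_norm_gradient_sq {n : ℕ} {h : EuclideanSpace ℝ (Fin n) → ℝ}
    (hh : ContDiff ℝ 1 h) : Continuous fun y => ‖gradient h y‖ ^ 2 := by
  simp only [norm_gradient_sq]
  have := hh.continuous_fderiv one_ne_zero
  fun_prop

lemma integral_fderiv_apply_eq_zero {n : ℕ} {V : EuclideanSpace ℝ (Fin n) → ℝ}
    (hV : ContDiff ℝ 1 V) (hVc : HasCompactSupport V) (v : EuclideanSpace ℝ (Fin n)) :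
    ∫ y, fderiv ℝ V y v = 0 := by
  have hcont : Continuous fun y => fderiv ℝ V y v := by
    have := hV.continuous_fderiv one_ne_zero
    fun_prop
  -- Integration by parts against the constant function `1`.
  have := integral_mul_fderiv_eq_neg_fderiv_mul_of_integrable (μ := volume)
    (f := fun _ : EuclideanSpace ℝ (Fin n) => (1 : ℝ)) (g := V) (v := v)
    (by simp)
    (by simpa using hcont.integrable_of_hasCompactSupport (hVc.fderiv_apply (𝕜 := ℝ) v))
    (by simpa using hV.continuous.integrable_of_hasCompactSupport hVc)
    (fun _ _ => by fun_prop) (fun _ _ => hV.differentiable one_ne_zero _)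
  simpa using this

/-- A smooth function on `U`, cut off by a factor supported in `U`, is smooth everywhere. -/
lemma contDiff_mul_of_tsupport_subset {n : ℕ} {U : Set (EuclideanSpace ℝ (Fin n))}
    (hU : IsOpen U) {ψ g : EuclideanSpace ℝ (Fin n) → ℝ} (hψ : ContDiff ℝ (⊤ : ℕ∞) ψ)
    (hψU : tsupport ψ ⊆ U) (hg : ContDiffOn ℝ (⊤ : ℕ∞) g U) :
    ContDiff ℝ (⊤ : ℕ∞) fun y => ψ y * g y := by
  refine contDiff_iff_contDiffAt.2 fun y => ?_
  by_cases hy : y ∈ tsupport ψ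
  · exact hψ.contDiffAt.mul (hg.contDiffAt (hU.mem_nhds (hψU hy)))
  · refine (contDiffAt_const (c := (0 : ℝ))).congr_of_eventuallyEq ?_
    filter_upwards [notMem_tsupport_iff_eventuallyEq.1 hy] with z hz
    simp [hz]

/-- The pointwise form of the estimate: it holds up to the divergence of `φ² f ∇f`. -/
lemma norm_gradient_mul_sq_le {n : ℕ} {c : ℝ} {f φ : EuclideanSpace ℝ (Fin n) → ℝ}
    {y : EuclideanSpace ℝ (Fin n)} (hf : ContDiffAt ℝ 2 f y) (hφ : DifferentiableAt ℝ φ y)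
    (hf0 : 0 ≤ f y) (hsub : -lap f y ≤ c * f y) :
    ‖gradient (fun z => φ z * f z) y‖ ^ 2 ≤
      (‖gradient φ y‖ ^ 2 + c * φ y ^ 2) * f y ^ 2 +
        ∑ i : Fin n, fderiv ℝ
          (fun z => φ z * (φ z * f z * fderiv ℝ f z (EuclideanSpace.single i 1))) y
          (EuclideanSpace.single i 1) := by
  have hfd : DifferentiableAt ℝ f y := hf.differentiableAt two_ne_zero
  have hf' : DifferentiableAt ℝ (fderiv ℝ f) y :=
    (hf.fderiv_right (m := 1) (by norm_num)).differentiableAt one_ne_zero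
  have hprod : ∀ v, fderiv ℝ (fun z => φ z * f z) y v
      = φ y * fderiv ℝ f y v + f y * fderiv ℝ φ y v := fun v => by
    rw [fderiv_fun_mul hφ hfd]; simp
  have hV : ∀ v, fderiv ℝ (fun z => φ z * (φ z * f z * fderiv ℝ f z v)) y v
      = φ y ^ 2 * f y * fderiv ℝ (fun z => fderiv ℝ f z v) y v
        + (fderiv ℝ (fun z => φ z * f z) y v) ^ 2 - (fderiv ℝ φ y v) ^ 2 * f y ^ 2 := fun v => by
    have hfv : DifferentiableAt ℝ (fun z => fderiv ℝ f z v) y := by fun_prop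
    rw [fderiv_fun_mul hφ ((hφ.fun_mul hfd).fun_mul hfv), fderiv_fun_mul (hφ.fun_mul hfd) hfv]
    simp only [add_apply, smul_apply, smul_eq_mul, hprod]
    ring
  have key : φ y ^ 2 * f y * (-lap f y) ≤ φ y ^ 2 * f y * (c * f y) :=
    mul_le_mul_of_nonneg_left hsub (by positivity)
  simp only [hV, norm_gradient_sq, Finset.sum_add_distrib, Finset.sum_sub_distrib,
    ← Finset.mul_sum, ← Finset.sum_mul]
  simp only [lap] at key
  linarith

/-- Caccioppoli-type estimate for a nonnegative subsolution of `-Δf ≤ c f` on a ball: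
for any smooth `φ` compactly supported in the ball,
`∫ ‖∇(φf)‖² ≤ ∫ (‖∇φ‖² + c φ²) f²`. -/
theorem caccioppoli_estimate (n : ℕ) (hn : 3 ≤ n)
    (x : EuclideanSpace ℝ (Fin n)) (R : ℝ) (hR : 0 < R)
    (c : ℝ) (hc : 0 ≤ c)
    (f : EuclideanSpace ℝ (Fin n) → ℝ)
    (U : Set (EuclideanSpace ℝ (Fin n))) (hU : IsOpen U)
    (hBU : closedBall x R ⊆ U)
    (hf : ContDiffOn ℝ (⊤ : ℕ∞) f U)
    (hf0 : ∀ y ∈ U, 0 ≤ f y)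
    (hsub : ∀ y ∈ ball x R, -lap f y ≤ c * f y)
    (φ : EuclideanSpace ℝ (Fin n) → ℝ)
    (hφ : ContDiff ℝ (⊤ : ℕ∞) φ) (hφc : HasCompactSupport φ)
    (hφsupp : tsupport φ ⊆ ball x R) :
    ∫ y in ball x R, ‖gradient (fun z => φ z * f z) y‖ ^ 2
      ≤ ∫ y in ball x R, (‖gradient φ y‖ ^ 2 + c * φ y ^ 2) * f y ^ 2 := by
  have hbU : ball x R ⊆ U := ball_subset_closedBall.trans hBU
  have h1 : (1 : WithTop ℕ∞) ≤ ((⊤ : ℕ∞) : WithTop ℕ∞) := by exact_mod_cast le_top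
  have h2 : (2 : WithTop ℕ∞) ≤ ((⊤ : ℕ∞) : WithTop ℕ∞) := by
    exact WithTop.coe_le_coe.2 (le_top : (2 : ℕ∞) ≤ ⊤)
  set V : Fin n → EuclideanSpace ℝ (Fin n) → ℝ := fun i z =>
    φ z * (φ z * f z * fderiv ℝ f z (EuclideanSpace.single i 1)) with hVdef
  have hφf : ContDiff ℝ (⊤ : ℕ∞) fun z => φ z * f z :=
    contDiff_mul_of_tsupport_subset hU hφ (hφsupp.trans hbU) hf
  have hV : ∀ i, ContDiff ℝ 1 (V i) := fun i => by
    have hf' : ContDiffOn ℝ (⊤ : ℕ∞) (fderiv ℝ f) U :=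
      hf.fderiv_of_isOpen hU (by exact_mod_cast le_top)
    exact (contDiff_mul_of_tsupport_subset hU hφ (hφsupp.trans hbU)
      (hφf.contDiffOn.mul (hf'.clm_apply contDiffOn_const))).of_le h1
  have hVc : ∀ i, HasCompactSupport (V i) := fun i => hφc.mul_right
  have hdV : ∀ i, Continuous fun y => fderiv ℝ (V i) y (EuclideanSpace.single i 1) := fun i => by
    have := (hV i).continuous_fderiv one_ne_zero
    fun_prop
  have hdVint : ∀ i, Integrable (fun y => fderiv ℝ (V i) y (EuclideanSpace.single i 1)) :=
    fun i => (hdV i).integrable_of_hasCompactSupport ((hVc i).fderiv_apply (𝕜 := ℝ) _)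
  -- The divergence is supported in the ball, so its integral over the ball is that over `ℝⁿ`.
  have hdiv : ∫ y in ball x R, ∑ i, fderiv ℝ (V i) y (EuclideanSpace.single i 1) = 0 := by
    rw [integral_finsetSum _ fun i _ => (hdVint i).integrableOn]
    refine Finset.sum_eq_zero fun i _ => ?_
    rw [setIntegral_eq_integral_of_forall_compl_eq_zero,
      integral_fderiv_apply_eq_zero (hV i) (hVc i)]
    intro y hy
    have hy' : y ∉ tsupport (V i) := fun h => hy (hφsupp (tsupport_mul_subset_left h))
    rw [fderiv_of_notMem_tsupport ℝ hy']
    rfl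
  have hL : IntegrableOn (fun y => ‖gradient (fun z => φ z * f z) y‖ ^ 2) (ball x R) :=
    ((continuous_norm_gradient_sq (hφf.of_le h1)).continuousOn.integrableOn_compact
      (isCompact_closedBall x R)).mono_set ball_subset_closedBall
  have hRint : IntegrableOn (fun y => (‖gradient φ y‖ ^ 2 + c * φ y ^ 2) * f y ^ 2)
      (ball x R) := by
    refine (ContinuousOn.integrableOn_compact (isCompact_closedBall x R) ?_).mono_set
      ball_subset_closedBall
    exact ((continuous_norm_gradient_sq (hφ.of_le h1)).add
      (continuous_const.mul (hφ.continuous.pow 2))).continuousOn.mul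
      ((hf.continuousOn.mono hBU).pow 2)
  have hS : IntegrableOn (fun y => ∑ i, fderiv ℝ (V i) y (EuclideanSpace.single i 1))
      (ball x R) := (integrable_finsetSum _ fun i _ => hdVint i).integrableOn
  calc ∫ y in ball x R, ‖gradient (fun z => φ z * f z) y‖ ^ 2
      ≤ ∫ y in ball x R, ((‖gradient φ y‖ ^ 2 + c * φ y ^ 2) * f y ^ 2
          + ∑ i, fderiv ℝ (V i) y (EuclideanSpace.single i 1)) :=
        setIntegral_mono_on hL (hRint.add hS) measurableSet_ball fun y hy =>
          norm_gradient_mul_sq_le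
            ((hf.contDiffAt (hU.mem_nhds (hbU hy))).of_le h2)
            (hφ.contDiffAt.differentiableAt (by simp))
            (hf0 y (hbU hy)) (hsub y hy)
    _ = _ := by rw [integral_add hRint hS, hdiv, add_zero]
end

section
/- Let n ≥ 3 be an integer and let p be a real number with 2 < p < 2n/(n−2). Define the quadratic polynomial Q(α) = (α−1)(1+α(p−2)) + α(p−1)·n/(n+2) − α²·(p−1)²(n−1)²/(n+2)². Then the discriminant of Q equals 4n(p−1)(2n−(n−2)p)/(n+2)², which is strictly positive; consequently there exists α ∈ ℝ with Q(α) > 0. -/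
/-!
The discriminant formula is a direct computation. Its factors `n`, `p - 1` and `2n - (n-2)p` are
positive, the last one because `p < 2n/(n-2)` and `n > 2`. If `Q` were nowhere positive, its
discriminant would be nonpositive (`discrim_le_zero_of_nonpos`); this covers every sign of the
leading coefficient, so no explicit `α` is needed.
-/

/-- The quadratic `Q(α) = (α-1)(1+α(p-2)) + α(p-1)n/(n+2) - α²(p-1)²(n-1)²/(n+2)²`
arising in Bakry's argument has discriminant `4n(p-1)(2n-(n-2)p)/(n+2)²`, which is
positive for `2 < p < 2n/(n-2)`; hence `Q(α) > 0` for some `α`. -/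
theorem bakry_discriminant (n : ℕ) (hn : 3 ≤ n) (p : ℝ) (hp2 : 2 < p)
    (hpn : p < 2 * n / (n - 2))
    (Q : ℝ → ℝ)
    (hQ : Q = fun α => (α - 1) * (1 + α * (p - 2)) + α * (p - 1) * n / (n + 2)
      - α ^ 2 * (p - 1) ^ 2 * ((n : ℝ) - 1) ^ 2 / ((n : ℝ) + 2) ^ 2)
    (a b c : ℝ)
    (ha : a = (p - 2) - (p - 1) ^ 2 * ((n : ℝ) - 1) ^ 2 / ((n : ℝ) + 2) ^ 2)
    (hb : b = (3 - p) + (p - 1) * n / (n + 2))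
    (hc : c = -1) :
    (∀ α : ℝ, Q α = a * α ^ 2 + b * α + c) ∧
    b ^ 2 - 4 * a * c = 4 * n * (p - 1) * (2 * n - ((n : ℝ) - 2) * p) / ((n : ℝ) + 2) ^ 2 ∧
    0 < b ^ 2 - 4 * a * c ∧
    ∃ α : ℝ, 0 < Q α := by
  have hn3 : (3 : ℝ) ≤ n := by exact_mod_cast hn
  have hQ' : ∀ α : ℝ, Q α = a * α ^ 2 + b * α + c := by
    intro α
    rw [hQ, ha, hb, hc]
    ring
  have hdisc : b ^ 2 - 4 * a * c
      = 4 * n * (p - 1) * (2 * n - ((n : ℝ) - 2) * p) / ((n : ℝ) + 2) ^ 2 := by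
    have h2 : (n : ℝ) + 2 ≠ 0 := by positivity
    rw [ha, hb, hc]
    field_simp
    ring
  have hpos : 0 < b ^ 2 - 4 * a * c := by
    have hlt : p * ((n : ℝ) - 2) < 2 * n := (lt_div_iff₀ (by linarith)).mp hpn
    have hfac : 0 < 2 * (n : ℝ) - ((n : ℝ) - 2) * p := by linarith
    have hp1 : 0 < p - 1 := by linarith
    rw [hdisc]
    positivity
  refine ⟨hQ', hdisc, hpos, ?_⟩
  by_contra! hneg
  have hle : discrim a b c ≤ 0 := discrim_le_zero_of_nonpos fun α => by
    have h := hneg α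
    rwa [hQ', sq] at h
  rw [discrim] at hle
  linarith
end
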